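/- arXiv:1410.1232 — 3 statements merged into one kernel-verified Lean document; each statement's English description precedes it below -/
import Mathlib

section
/- For all natural numbers i ≠ j, the matrix polynomials P_i and P_j are orthogonal with respect to the weight W_{p,n}: ∫_{-1}^{1} P_i(x) W_{p,n}(x) P_j(x)^T dx = 0 (the 2×2 zero matrix). -/
open Matrix

/-- Pochhammer symbol `(a)_k = a (a+1) ⋯ (a+k-1)`. -/
noncomputable def poch (a : ℝ) (k : ℕ) : ℝ := ∏ i ∈ Finset.range k, (a + i)

/-- Gegenbauer polynomial `C_w^λ(x)`, with the convention `C_w^λ = 0` for `w < 0`. -/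
noncomputable def geg (l : ℝ) (w : ℤ) (x : ℝ) : ℝ :=
  if w < 0 then 0 else
    poch (2 * l) w.toNat / (w.toNat.factorial : ℝ) *
      ∑ k ∈ Finset.range (w.toNat + 1),
        (poch (-(w.toNat : ℝ)) k * poch ((w.toNat : ℝ) + 2 * l) k) /
            (poch (l + 1 / 2) k * (k.factorial : ℝ)) * ((1 - x) / 2) ^ k

/-- The weight matrix `W_{p,n}(x)`. -/
noncomputable def Wmat (n : ℕ) (p : ℝ) (x : ℝ) : Matrix (Fin 2) (Fin 2) ℝ :=
  (1 - x ^ 2) ^ ((n : ℝ) / 2 - 1) •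
    !![p * x ^ 2 + (n : ℝ) - p, -(n : ℝ) * x; -(n : ℝ) * x, ((n : ℝ) - p) * x ^ 2 + p]

/-- The matrix valued polynomial `P_w`. -/
noncomputable def Pmat (n : ℕ) (p : ℝ) (w : ℕ) (x : ℝ) : Matrix (Fin 2) (Fin 2) ℝ :=
  !![1 / ((n : ℝ) + 1) * geg (((n : ℝ) + 1) / 2) (w : ℤ) x +
        1 / (p + w) * geg (((n : ℝ) + 3) / 2) ((w : ℤ) - 2) x,
      1 / (p + w) * geg (((n : ℝ) + 3) / 2) ((w : ℤ) - 1) x;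
      1 / ((n : ℝ) - p + w) * geg (((n : ℝ) + 3) / 2) ((w : ℤ) - 1) x,
      1 / ((n : ℝ) + 1) * geg (((n : ℝ) + 1) / 2) (w : ℤ) x +
        1 / ((n : ℝ) - p + w) * geg (((n : ℝ) + 3) / 2) ((w : ℤ) - 2) x]

open Polynomial in
/-- coefficients of the Gegenbauer polynomial in the variable `(1-x)/2` -/
noncomputable def gcf (l : ℝ) (w k : ℕ) : ℝ :=
  poch (2 * l) w / (w.factorial : ℝ) * ((poch (-(w : ℝ)) k * poch ((w : ℝ) + 2 * l) k) /
            (poch (l + 1 / 2) k * (k.factorial : ℝ)))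

lemma poch_succ (a : ℝ) (k : ℕ) : poch a (k + 1) = poch a k * (a + k) := by
  simp [poch, Finset.prod_range_succ]

lemma poch_succ_left (a : ℝ) (k : ℕ) : poch a (k + 1) = a * poch (a + 1) k := by
  unfold poch
  rw [Finset.prod_range_succ', mul_comm]
  congr 1
  · simp
  · apply Finset.prod_congr rfl
    intro i _
    push_cast; ring

lemma poch_pos {a : ℝ} (ha : 0 < a) (k : ℕ) : 0 < poch a k := by
  unfold poch
  exact Finset.prod_pos fun i _ => by positivity

lemma poch_neg_eq_zero {w k : ℕ} (h : w < k) : poch (-(w : ℝ)) k = 0 := by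
  unfold poch
  exact Finset.prod_eq_zero (Finset.mem_range.2 h) (by simp)

/-- the Gegenbauer polynomial in the variable `(1-x)/2` -/
noncomputable def gpol (l : ℝ) (w : ℕ) : Polynomial ℝ :=
  ∑ k ∈ Finset.range (w + 1), Polynomial.monomial k (gcf l w k)

lemma gpol_coeff (l : ℝ) (w k : ℕ) : (gpol l w).coeff k = gcf l w k := by
  unfold gpol
  rw [Polynomial.finsetSum_coeff]
  simp only [Polynomial.coeff_monomial]
  rw [Finset.sum_ite_eq']
  split_ifs with h
  · rfl
  · have : w < k := by simpa using h
    simp [gcf, poch_neg_eq_zero this]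

lemma geg_eq (l : ℝ) (w : ℕ) (x : ℝ) : geg l (w : ℤ) x = (gpol l w).eval ((1 - x) / 2) := by
  unfold geg gpol
  rw [if_neg (by omega), Polynomial.eval_finsetSum, Finset.mul_sum]
  simp only [Int.toNat_natCast, Polynomial.eval_monomial, gcf, mul_assoc]

lemma gcf_rec {l : ℝ} (hl : 0 < l) (w k : ℕ) :
    gcf l w (k + 1) * ((k + 1) * (l + 1 / 2 + k)) = gcf l w k * ((k - w) * (w + 2 * l + k)) := by
  have h1 := poch_pos (a := l + 1 / 2) (by positivity) k
  have h2 : (0 : ℝ) < l + 1 / 2 + k := by positivity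
  unfold gcf
  rw [poch_succ, poch_succ, poch_succ, Nat.factorial_succ]
  push_cast
  field_simp
  ring

open Polynomial in
lemma gpol_der {l : ℝ} (hl : 0 < l) (w : ℕ) :
    derivative (gpol l (w + 1)) = C (-(4 * l)) * gpol (l + 1) w := by
  ext k
  rw [coeff_derivative, coeff_C_mul, gpol_coeff, gpol_coeff]
  have h1 := poch_pos (a := l + 1 + 1 / 2) (by positivity) k
  unfold gcf
  have e1 : poch (2 * l) (w + 1) * ((w + 1 : ℕ) + 2 * l) =
      2 * l * ((2 * l + 1) * poch (2 * (l + 1)) w) := by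
    have := poch_succ (2 * l) (w + 1)
    rw [poch_succ_left, poch_succ_left] at this
    rw [show 2 * (l + 1) = 2 * l + 1 + 1 by ring, this]; push_cast; ring
  have e2 : poch (-((w + 1 : ℕ) : ℝ)) (k + 1) = -(w + 1) * poch (-(w : ℝ)) k := by
    rw [poch_succ_left]; push_cast; congr 2; ring
  have e3 : poch (((w + 1 : ℕ) : ℝ) + 2 * l) (k + 1) =
      ((w + 1 : ℕ) + 2 * l) * poch (w + 2 * (l + 1)) k := by
    rw [poch_succ_left]; push_cast; congr 2; ring
  have e4 : poch (l + 1 / 2) (k + 1) = (l + 1 / 2) * poch (l + 1 + 1 / 2) k := by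
    rw [poch_succ_left]; congr 2; ring
  have e5 : poch (2 * l) (w + 1) = 
      2 * l * ((2 * l + 1) * poch (2 * (l + 1)) w) / ((w + 1 : ℕ) + 2 * l) := by
    rw [← e1]; field_simp
  rw [e2, e3, e4, e5, Nat.factorial_succ, Nat.factorial_succ]
  push_cast
  field_simp
  ring

open Polynomial in
lemma gpol_der_zero {l : ℝ} : derivative (gpol l 0) = 0 := by
  simp [gpol]

open Polynomial in
lemma gpol_ode {l : ℝ} (hl : 0 < l) (w : ℕ) :
    X * derivative (derivative (gpol l w)) - X * (X * derivative (derivative (gpol l w)))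
      + C (l + 1 / 2) * derivative (gpol l w) - C (2 * l + 1) * (X * derivative (gpol l w))
      + C (w * (w + 2 * l)) * gpol l w = 0 := by
  ext k
  have h0 := gcf_rec hl w k
  rcases k with _ | _ | k
  · simp only [coeff_add, coeff_sub, coeff_C_mul, coeff_derivative, gpol_coeff, coeff_X_mul_zero,
      coeff_zero]
    push_cast at *
    linear_combination h0
  · simp only [coeff_add, coeff_sub, coeff_C_mul, coeff_derivative, gpol_coeff, coeff_X_mul_zero,
      coeff_zero, coeff_X_mul]
    push_cast at *
    linear_combination h0
  · simp only [coeff_add, coeff_sub, coeff_C_mul, coeff_derivative, gpol_coeff,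
      coeff_zero, coeff_X_mul]
    push_cast at *
    linear_combination h0

/-- contiguous relation, coefficient form -/
lemma gcf_cont {l : ℝ} (hl : 0 < l) (w k : ℕ) :
    (k - w) * gcf l w k - 1 / 2 * ((k + 1) * gcf l w (k + 1)) =
      gcf l w k * ((k - w) * (k + 1 - w)) / (2 * l + 1 + 2 * k) := by
  have h0 := gcf_rec hl w k
  have h2 : (0 : ℝ) < 2 * l + 1 + 2 * k := by positivity
  rw [eq_div_iff h2.ne']
  linear_combination -h0

lemma gcf_cont2 {l : ℝ} (hl : 0 < l) (w k : ℕ) :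
    gcf l (w + 2) k * ((k - (w + 2)) * (k + 1 - (w + 2))) / (2 * l + 1 + 2 * k) =
      2 * l * gcf (l + 1) w k := by
  have h1 := poch_pos (a := l + 1 + 1 / 2) (by positivity) k
  have h3 := poch_pos (a := l + 1 / 2) (by positivity) k
  have h2 : (0 : ℝ) < l + 1 / 2 + k := by positivity
  have e2 : poch (-((w + 2 : ℕ) : ℝ)) k * ((k - (w + 2)) * (k + 1 - (w + 2))) =
      (w + 2) * (w + 1) * poch (-(w : ℝ)) k := by
    have A := poch_succ (-((w + 2 : ℕ) : ℝ)) (k + 1)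
    have B := poch_succ_left (-((w + 2 : ℕ) : ℝ)) (k + 1)
    rw [poch_succ_left (-((w + 2 : ℕ) : ℝ) + 1),
      show -((w + 2 : ℕ) : ℝ) + 1 + 1 = -w by push_cast; ring] at B
    have this := A.symm.trans B
    rw [poch_succ] at this
    push_cast at *
    linear_combination this
  have e4 : poch (l + 1 / 2) k = (l + 1 / 2) * poch (l + 1 + 1 / 2) k / (l + 1 / 2 + k) := by
    rw [eq_div_iff h2.ne', ← poch_succ, poch_succ_left]; congr 2; ring
  have e5 : poch (2 * l) (w + 2) = 2 * l * ((2 * l + 1) * poch (2 * (l + 1)) w) := by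
    rw [poch_succ_left, poch_succ_left]; congr 4; ring
  have e6 : ((w + 2 : ℕ) : ℝ) + 2 * l = w + 2 * (l + 1) := by push_cast; ring
  have : gcf l (w + 2) k * ((k - (w + 2)) * (k + 1 - (w + 2))) / (2 * l + 1 + 2 * k) =
      poch (2 * l) (w + 2) / ((w + 2).factorial : ℝ) *
      (((poch (-((w + 2 : ℕ) : ℝ)) k * ((k - (w + 2)) * (k + 1 - (w + 2)))) *
       poch (((w + 2 : ℕ) : ℝ) + 2 * l) k) /
            (poch (l + 1 / 2) k * (k.factorial : ℝ))) / (2 * (l + 1 / 2 + k)) := by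
    unfold gcf; rw [show 2 * l + 1 + 2 * k = 2 * (l + 1 / 2 + k) by ring]; ring
  rw [this, e2, e4, e5, e6, Nat.factorial_succ, Nat.factorial_succ]
  unfold gcf
  push_cast
  field_simp
  ring

open Polynomial in
lemma gpol_cont {l : ℝ} (hl : 0 < l) (w : ℕ) :
    X * derivative (gpol l w) - C (1 / 2) * derivative (gpol l w) - C (w : ℝ) * gpol l w =
      C (2 * l) * (if 2 ≤ w then gpol (l + 1) (w - 2) else 0) := by
  have key : ∀ k, (X * derivative (gpol l w) - C (1 / 2) * derivative (gpol l w)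
      - C (w : ℝ) * gpol l w).coeff k = 
      gcf l w k * ((k - w) * (k + 1 - w)) / (2 * l + 1 + 2 * k) := by
    intro k
    rw [← gcf_cont hl]
    rcases k with _ | k
    · simp only [coeff_sub, coeff_C_mul, coeff_derivative, gpol_coeff, coeff_X_mul_zero]
      push_cast
      ring
    · simp only [coeff_sub, coeff_C_mul, coeff_derivative, gpol_coeff, coeff_X_mul]
      push_cast
      ring
  ext k
  rw [key, coeff_C_mul]
  split_ifs with h
  · obtain ⟨v, rfl⟩ := Nat.exists_eq_add_of_le' h
    rw [Nat.add_sub_cancel, gpol_coeff, ← gcf_cont2 hl]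
    push_cast; rfl
  · rw [coeff_zero, mul_zero]
    have : w = 0 ∨ w = 1 := by omega
    rcases lt_or_ge w k with hk | hk
    · simp [gcf, poch_neg_eq_zero hk]
    · have : ((k : ℝ) - w) * (k + 1 - w) = 0 := by
        have : k = w ∨ k + 1 = w := by omega
        rcases this with h | h
        · simp [h]
        · have : (k : ℝ) + 1 = w := by exact_mod_cast h
          rw [this]; ring
      rw [this]; simp

/-- Everything we need about the Gegenbauer functions. -/
lemma geg_facts (n w : ℕ) : ∃ f f1 f2 : ℝ → ℝ,
    (∀ x, HasDerivAt f (f1 x) x) ∧ (∀ x, HasDerivAt f1 (f2 x) x) ∧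
    (∀ x, (1 - x ^ 2) * f2 x - (n + 2) * x * f1 x + w * (w + n + 1) * f x = 0) ∧
    (∀ x, 1 / ((n : ℝ) + 1) * geg (((n : ℝ) + 1) / 2) (w : ℤ) x = f x) ∧
    (∀ x, geg (((n : ℝ) + 3) / 2) ((w : ℤ) - 1) x = f1 x) ∧
    (∀ x, geg (((n : ℝ) + 3) / 2) ((w : ℤ) - 2) x = x * f1 x - w * f x) := by
  set l : ℝ := ((n : ℝ) + 1) / 2 with hl
  have hl0 : 0 < l := by positivity
  have hl1 : ((n : ℝ) + 3) / 2 = l + 1 := by rw [hl]; ring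
  have hn : (n : ℝ) = 2 * l - 1 := by rw [hl]; ring
  have hd : ∀ (q : Polynomial ℝ) (x : ℝ), HasDerivAt (fun x => q.eval ((1 - x) / 2))
      (-(1 / 2) * q.derivative.eval ((1 - x) / 2)) x := by
    intro q x
    have h1 : HasDerivAt (fun x : ℝ => (1 - x) / 2) (-1 / 2) x :=
      ((hasDerivAt_id x).const_sub 1).div_const 2
    have := (q.hasDerivAt ((1 - x) / 2)).comp x h1
    exact this.congr_deriv (by ring)
  set F := gpol l w with hF
  refine ⟨fun x => 1 / (2 * l) * F.eval ((1 - x) / 2),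
    fun x => 1 / (2 * l) * (-(1 / 2) * F.derivative.eval ((1 - x) / 2)),
    fun x => 1 / (2 * l) * (-(1 / 2) * (-(1 / 2) * F.derivative.derivative.eval ((1 - x) / 2))),
    fun x => (hd _ x).const_mul _, fun x => ((hd _ x).const_mul _).const_mul _, ?_, ?_, ?_, ?_⟩
  · intro x
    have := congrArg (Polynomial.eval ((1 - x) / 2)) (gpol_ode hl0 w)
    simp only [Polynomial.eval_add, Polynomial.eval_sub, Polynomial.eval_mul, Polynomial.eval_C,
      Polynomial.eval_X, Polynomial.eval_zero] at this
    rw [hn]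
    linear_combination (1 / (2 * l)) * this
  · intro x
    rw [geg_eq, hn]; congr 2; ring
  · intro x
    rw [hl1]
    rcases w with _ | w
    · simp only [hF, gpol_der_zero]
      simp [geg]
    · rw [show ((w + 1 : ℕ) : ℤ) - 1 = (w : ℤ) by push_cast; ring, geg_eq, hF, gpol_der hl0]
      simp only [Polynomial.eval_mul, Polynomial.eval_C]
      field_simp
      ring
  · intro x
    rw [hl1]
    have := congrArg (Polynomial.eval ((1 - x) / 2)) (gpol_cont hl0 w)
    simp only [Polynomial.eval_sub, Polynomial.eval_mul, Polynomial.eval_C,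
      Polynomial.eval_X] at this
    have e : geg (l + 1) ((w : ℤ) - 2) x =
        Polynomial.eval ((1 - x) / 2) (if 2 ≤ w then gpol (l + 1) (w - 2) else 0) := by
      split_ifs with h
      · rw [← geg_eq]; congr 1; omega
      · rw [geg, if_pos (by omega)]; simp
    rw [e]
    rw [← hF] at this
    have h2 : (2 * l) ≠ 0 := by positivity
    apply mul_left_cancel₀ h2
    rw [← this]
    field_simp
    ring

lemma int_zero (G g : ℝ → ℝ) (hc : Continuous G) (h1 : G 1 = 0) (h2 : G (-1) = 0)
    (hd : ∀ x ∈ Set.Ioo (-1 : ℝ) 1, HasDerivAt G (g x) x) : ∫ x in (-1 : ℝ)..1, g x = 0 := by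
  by_cases hi : IntervalIntegrable g MeasureTheory.volume (-1) 1
  · rw [intervalIntegral.integral_eq_sub_of_hasDerivAt_of_le (by norm_num) hc.continuousOn hd hi,
      h1, h2, sub_zero]
  · exact intervalIntegral.integral_undef hi

/-- the common shape of all the integrals -/
lemma master (n : ℕ) (hn : 1 ≤ n) (i j : ℕ) (hij : i ≠ j) (f f1 f2 g g1 g2 : ℝ → ℝ)
    (hf : ∀ x, HasDerivAt f (f1 x) x) (hf1 : ∀ x, HasDerivAt f1 (f2 x) x)
    (hfo : ∀ x, (1 - x ^ 2) * f2 x - (n + 2) * x * f1 x + i * (i + n + 1) * f x = 0)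
    (hg : ∀ x, HasDerivAt g (g1 x) x) (hg1 : ∀ x, HasDerivAt g1 (g2 x) x)
    (hgo : ∀ x, (1 - x ^ 2) * g2 x - (n + 2) * x * g1 x + j * (j + n + 1) * g x = 0)
    (c : ℝ) (A B D E : ℝ) (h : ℝ → ℝ)
    (hh : ∀ x, h x = c * ((1 - x ^ 2) ^ ((n : ℝ) / 2 - 1) * (
      A * ((1 - x ^ 2 - n * x ^ 2) * (f x * g x) + x * (1 - x ^ 2) * (f1 x * g x + f x * g1 x))
      + B * ((1 - x ^ 2) * (f1 x * g x + f x * g1 x) - n * x * (f x * g x))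
      + D * ((1 - x ^ 2) * (f x * g x))
      + E * ((1 - x ^ 2) ^ 2 * (f1 x * g1 x))))) :
    ∫ x in (-1 : ℝ)..1, h x = 0 := by
  have hn0 : (0 : ℝ) < n := by exact_mod_cast hn
  set mi : ℝ := i * (i + n + 1) with hmi
  set mj : ℝ := j * (j + n + 1) with hmj
  have hm : mj - mi ≠ 0 := by
    have : mj - mi = ((j : ℝ) - i) * (i + j + n + 1) := by rw [hmi, hmj]; ring
    rw [this]
    apply mul_ne_zero
    · rw [sub_ne_zero]; exact_mod_cast hij.symm
    · positivity
  have cf : Continuous f := continuous_iff_continuousAt.2 fun x => (hf x).continuousAt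
  have cf1 : Continuous f1 := continuous_iff_continuousAt.2 fun x => (hf1 x).continuousAt
  have cg : Continuous g := continuous_iff_continuousAt.2 fun x => (hg x).continuousAt
  have cg1 : Continuous g1 := continuous_iff_continuousAt.2 fun x => (hg1 x).continuousAt
  have cw : Continuous fun x : ℝ => (1 - x ^ 2) ^ ((n : ℝ) / 2) :=
    (by fun_prop : Continuous fun x : ℝ => 1 - x ^ 2).rpow_const fun x => Or.inr (by positivity)
  apply int_zero (fun x => c * ((1 - x ^ 2) ^ ((n : ℝ) / 2) * 
    (A * (x * (f x * g x)) + B * (f x * g x) 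
      + (D + E * mi) / (mj - mi) * ((1 - x ^ 2) * (f1 x * g x - f x * g1 x))
      + E * ((1 - x ^ 2) * (f1 x * g x)))))
  · fun_prop
  · have : (n : ℝ) / 2 ≠ 0 := by positivity
    simp [Real.zero_rpow this]
  · have : (n : ℝ) / 2 ≠ 0 := by positivity
    simp [Real.zero_rpow this]
  · intro x hx
    have hx0 : 0 < 1 - x ^ 2 := by nlinarith [hx.1, hx.2]
    have hs : HasDerivAt (fun x : ℝ => 1 - x ^ 2) (-(2 * x)) x := by
      have := ((hasDerivAt_id x).pow 2).const_sub 1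
      simpa using this
    have hw := hs.rpow_const (p := (n : ℝ) / 2) (Or.inl hx0.ne')
    have hfg := (hf x).mul (hg x)
    have ht := (((((hasDerivAt_id x).mul hfg).const_mul A).add (hfg.const_mul B)).add
      ((hs.mul (((hf1 x).mul (hg x)).sub ((hf x).mul (hg1 x)))).const_mul
        ((D + E * mi) / (mj - mi)))).add ((hs.mul ((hf1 x).mul (hg x))).const_mul E)
    have := (hw.mul ht).const_mul c
    refine this.congr_deriv ?_
    rw [hh]
    have e : (1 - x ^ 2) ^ ((n : ℝ) / 2) = (1 - x ^ 2) ^ ((n : ℝ) / 2 - 1) * (1 - x ^ 2) := by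
      rw [← Real.rpow_add_one hx0.ne']; congr 1; ring
    simp only [Pi.mul_apply, Pi.add_apply, Pi.sub_apply, id]
    rw [e]
    set W := (1 - x ^ 2) ^ ((n : ℝ) / 2 - 1)
    have H1 := hfo x
    have H2 := hgo x
    obtain ⟨K, hK⟩ : ∃ K, K = (D + E * mi) / (mj - mi) := ⟨_, rfl⟩
    have hK2 : K * (mj - mi) = D + E * mi := by rw [hK]; field_simp
    rw [← hK]
    linear_combination (c * W * (1 - x ^ 2)) * ((K + E) * g x * H1 - K * f x * H2
      + f x * g x * hK2)

theorem stmt_3 (n : ℕ) (hn : 1 ≤ n) (p : ℝ) (hp : 0 < p) (hpn : p < n) :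
    ∀ i j : ℕ, i ≠ j → ∀ a b : Fin 2,
      ∫ x in (-1 : ℝ)..1, (Pmat n p i x * Wmat n p x * (Pmat n p j x)ᵀ) a b = 0 := by
  intro i j hij a b
  obtain ⟨f, f1, f2, hf, hf1, hfo, hfa, hfb, hfc⟩ := geg_facts n i
  obtain ⟨g, g1, g2, hg, hg1, hgo, hga, hgb, hgc⟩ := geg_facts n j
  have q0 : 0 < n - p := by linarith
  have a1 : p + i ≠ 0 := by positivity
  have a2 : p + j ≠ 0 := by positivity
  have a3 : n - p + i ≠ 0 := by positivity
  have a4 : n - p + j ≠ 0 := by positivity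
  have hP : ∀ x, Pmat n p i x = !![1 / (p + i) * (p * f x + x * f1 x), 1 / (p + i) * f1 x;
      1 / (n - p + i) * f1 x, 1 / (n - p + i) * ((n - p) * f x + x * f1 x)] := by
    intro x
    unfold Pmat
    rw [hfa, hfb, hfc]
    congr! 3
    · field_simp; ring
    · congr! 1; field_simp; ring
  have hQ : ∀ x, Pmat n p j x = !![1 / (p + j) * (p * g x + x * g1 x), 1 / (p + j) * g1 x;
      1 / (n - p + j) * g1 x, 1 / (n - p + j) * ((n - p) * g x + x * g1 x)] := by
    intro x
    unfold Pmat
    rw [hga, hgb, hgc]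
    congr! 3
    · field_simp; ring
    · congr! 1; field_simp; ring
  have M := master n hn i j hij f f1 f2 g g1 g2 hf hf1 hfo hg hg1 hgo
  fin_cases a <;> fin_cases b
  · apply M (1 / (p + i) * (1 / (p + j))) (-p ^ 2) 0 (p ^ 2 * (n - p + 1)) p
    intro x
    rw [hP, hQ]
    simp [Wmat, Matrix.mul_apply, Fin.sum_univ_two]
    ring
  · apply M (1 / (p + i) * (1 / (n - p + j))) 0 (p * (n - p)) 0 0
    intro x
    rw [hP, hQ]
    simp [Wmat, Matrix.mul_apply, Fin.sum_univ_two]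
    ring
  · apply M (1 / (n - p + i) * (1 / (p + j))) 0 (p * (n - p)) 0 0
    intro x
    rw [hP, hQ]
    simp [Wmat, Matrix.mul_apply, Fin.sum_univ_two]
    ring
  · apply M (1 / (n - p + i) * (1 / (n - p + j))) (-(n - p) ^ 2) 0 ((n - p) ^ 2 * (p + 1)) (n - p)
    intro x
    rw [hP, hQ]
    simp [Wmat, Matrix.mul_apply, Fin.sum_univ_two]
    ring
end

section
/- (Finite Parseval identity.) For any N ∈ ℕ and any 2×2 real matrices A_0, …, A_N, ∫_{-1}^{1} tr( (Σ_{w=0}^{N} A_w Q_w(x)) W_{p,n}(x) (Σ_{w=0}^{N} A_w Q_w(x))^T ) dx = Σ_{w=0}^{N} tr(A_w A_w^T). -/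
open Matrix

/-- The normalizing matrix `S_w`: the (diagonal, positive definite) inverse square root
of `‖P_w‖² = ∫_{-1}^1 P_w W_{p,n} P_w^T dx`, given explicitly. -/
noncomputable def Smat (n : ℕ) (p : ℝ) (w : ℕ) : Matrix (Fin 2) (Fin 2) ℝ :=
  Real.sqrt (((w.factorial : ℝ) * ((n : ℝ) + 1) * ((n : ℝ) + 2 * w + 1) *
        Real.Gamma ((n : ℝ) / 2 + 3 / 2)) /
      (Real.sqrt Real.pi * 2 ^ (w / 2) * Real.Gamma ((n : ℝ) / 2 + 1 + (w / 2 : ℕ)) *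
        ∏ k ∈ Finset.range ((w + 1) / 2), ((n : ℝ) + 2 * k + 1))) •
    Matrix.diagonal ![Real.sqrt ((p + w) / (p * ((n : ℝ) - p + w + 1))),
      Real.sqrt (((n : ℝ) - p + w) / (((n : ℝ) - p) * (p + w + 1)))]

/-- The orthonormal matrix valued polynomials `Q_w = S_w P_w`. -/
noncomputable def Qmat (n : ℕ) (p : ℝ) (w : ℕ) (x : ℝ) : Matrix (Fin 2) (Fin 2) ℝ :=
  Smat n p w * Pmat n p w x


namespace GegAux
open Polynomial

lemma poch_succ (a : ℝ) (k : ℕ) : poch a (k+1) = poch a k * (a + k) := by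
  simp [poch, Finset.prod_range_succ]

lemma poch_succ' (a : ℝ) (k : ℕ) : poch a (k+1) = a * poch (a+1) k := by
  simp only [poch, Finset.prod_range_succ']
  rw [mul_comm]
  congr 1
  · simp
  · apply Finset.prod_congr rfl
    intro i _
    push_cast; ring

lemma poch_pos {a : ℝ} (ha : 0 < a) (k : ℕ) : 0 < poch a k :=
  Finset.prod_pos (fun i _ => by positivity)

lemma poch_neg_zero (w k : ℕ) (h : w < k) : poch (-(w:ℝ)) k = 0 := by
  apply Finset.prod_eq_zero (Finset.mem_range.mpr h)
  simp

/-- coefficients of the Gegenbauer polynomial in the variable `(1-x)/2`. -/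
noncomputable def cf (l : ℝ) (w k : ℕ) : ℝ :=
  poch (2*l) w / (w.factorial : ℝ) *
    ((poch (-(w : ℝ)) k * poch ((w : ℝ) + 2 * l) k) / (poch (l + 1 / 2) k * (k.factorial : ℝ)))

noncomputable def T (l : ℝ) (w : ℕ) : ℝ[X] := ∑ k ∈ Finset.range (w+1), monomial k (cf l w k)

lemma coeff_T (l : ℝ) (w k : ℕ) : (T l w).coeff k = cf l w k := by
  simp only [T, finsetSum_coeff, coeff_monomial]
  rw [Finset.sum_ite_eq' (Finset.range (w+1)) k]
  split_ifs with h
  · rfl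
  · simp only [Finset.mem_range, not_lt] at h
    simp [cf, poch_neg_zero w k (by omega)]

lemma geg_eq (l : ℝ) (w : ℕ) (x : ℝ) : geg l (w:ℤ) x = (T l w).eval ((1-x)/2) := by
  simp only [geg, T, eval_finsetSum, eval_monomial]
  rw [if_neg (by omega), Finset.mul_sum]
  simp only [Int.toNat_natCast, cf]
  exact Finset.sum_congr rfl (fun k _ => by ring)

lemma R1 {l : ℝ} (hl : 0 < l) (w k : ℕ) :
    ((k:ℝ)+1)*(l+1/2+k) * cf l w (k+1) = ((k:ℝ)-w)*(w+2*l+k) * cf l w k := by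
  have h1 := (poch_pos (show 0 < l + 1/2 by positivity) k).ne'
  have h2 : (l + 1/2 + k) ≠ 0 := by positivity
  have h3 : ((k:ℝ)+1) ≠ 0 := by positivity
  have h4 : (k.factorial:ℝ) ≠ 0 := by positivity
  have h5 : (w.factorial:ℝ) ≠ 0 := by positivity
  simp only [cf, poch_succ, Nat.factorial_succ]
  push_cast
  generalize poch (l+1/2) k = u at *
  generalize l + 1/2 + (k:ℝ) = v at *
  field_simp
  ring

lemma R3 {l : ℝ} (hl : 0 < l) (w k : ℕ) :
    ((k:ℝ)+1)*(l+1/2+k) * cf l (w+1) (k+1) = -((w+1+2*l+k)*(w+2*l+k) * cf l w k) := by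
  have h1 := (poch_pos (show 0 < l + 1/2 by positivity) k).ne'
  have h2 : (l + 1/2 + k) ≠ 0 := by positivity
  have h3 : ((k:ℝ)+1) ≠ 0 := by positivity
  have h4 : (k.factorial:ℝ) ≠ 0 := by positivity
  have h5 : (w.factorial:ℝ) ≠ 0 := by positivity
  have h6 : ((w:ℝ)+1) ≠ 0 := by positivity
  have e1 : poch (-((w+1:ℕ):ℝ)) (k+1) = -((w:ℝ)+1) * poch (-(w:ℝ)) k := by
    rw [poch_succ']; push_cast
    rw [show -((w:ℝ)+1)+1 = -w by ring]
  have e2 : ((w:ℝ)+2*l) * poch (((w+1:ℕ):ℝ)+2*l) (k+1)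
      = poch ((w:ℝ)+2*l) k * (w+2*l+k) * (w+2*l+k+1) := by
    have := poch_succ' ((w:ℝ)+2*l) (k+1)
    rw [poch_succ, poch_succ] at this
    push_cast at this ⊢
    rw [show (w:ℝ)+1+2*l = w+2*l+1 by ring, ← this]; ring
  have e3 : cf l (w+1) (k+1) = poch (2*l) w / ((w+1)*w.factorial) *
      ((-((w:ℝ)+1) * poch (-(w:ℝ)) k) * (poch ((w:ℝ)+2*l) k * (w+2*l+k) * (w+2*l+k+1))
        / ((poch (l + 1 / 2) k * (l+1/2+k)) * ((k+1) * k.factorial))) := by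
    rw [← e2]
    simp only [cf]
    rw [e1, poch_succ (2*l) w, poch_succ (l+1/2) k, Nat.factorial_succ, Nat.factorial_succ]
    push_cast; ring
  rw [e3]
  simp only [cf]
  generalize poch (l+1/2) k = u at *
  generalize l + 1/2 + (k:ℝ) = v at *
  field_simp
  ring

lemma R2 {l : ℝ} (hl : 0 < l) (w k : ℕ) :
    ((w:ℝ)+1-k) * cf l (w+1) k = (w+2*l+k) * cf l w k := by
  have a := R1 hl (w+1) k
  rw [R3 hl w k] at a
  push_cast at a
  have : (w+1+2*l+k) ≠ 0 := by positivity
  apply mul_left_cancel₀ this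
  linear_combination a

lemma RD {l : ℝ} (hl : 0 < l) (w k : ℕ) :
    ((k:ℝ)+1) * cf l (w+1) (k+1) = - (4*l * cf (l+1) w k) := by
  have h1 := (poch_pos (show 0 < l + 1 + 1/2 by positivity) k).ne'
  have h2 : (l + 1/2) ≠ 0 := by positivity
  have h3 : ((k:ℝ)+1) ≠ 0 := by positivity
  have h4 : (k.factorial:ℝ) ≠ 0 := by positivity
  have h5 : (w.factorial:ℝ) ≠ 0 := by positivity
  have h6 : ((w:ℝ)+1) ≠ 0 := by positivity
  have e1 : poch (-((w+1:ℕ):ℝ)) (k+1) = -((w:ℝ)+1) * poch (-(w:ℝ)) k := by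
    rw [poch_succ']; push_cast
    rw [show -((w:ℝ)+1)+1 = -w by ring]
  have e2 : poch (2*l) (w+1) * poch (((w+1:ℕ):ℝ)+2*l) (k+1)
      = 2*l*(2*l+1)*poch (2*(l+1)) w * poch ((w:ℝ)+2*(l+1)) k := by
    have a := poch_succ (2*l) (w+1)
    rw [poch_succ' (2*l) (w+1), poch_succ' (2*l+1) w] at a
    rw [poch_succ' (((w+1:ℕ):ℝ)+2*l)]
    push_cast at a ⊢
    rw [show (w:ℝ)+1+2*l+1 = w+2*(l+1) by ring]
    rw [show 2*l+1+1 = 2*(l+1) by ring] at a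
    linear_combination -poch ((w:ℝ)+2*(l+1)) k * a
  have e3 : cf l (w+1) (k+1) = (poch (2*l) (w+1) * poch (((w+1:ℕ):ℝ)+2*l) (k+1)) * poch (-((w+1:ℕ):ℝ)) (k+1)
      / (((w+1)*w.factorial) * ((l+1/2)* poch (l + 1 + 1 / 2) k) * ((k+1) * k.factorial)) := by
    simp only [cf]
    rw [poch_succ' (l+1/2) k, Nat.factorial_succ, Nat.factorial_succ,
      show l + 1/2 + 1 = l + 1 + 1/2 by ring]
    push_cast; field_simp
  rw [e3, e1, e2]
  simp only [cf]
  generalize poch (l+1+1/2) k = u at *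
  field_simp
  ring

lemma X1X_coeff (q : ℝ[X]) (k : ℕ) : ((X - X^2) * derivative q).coeff (k+1)
    = (k+1) * q.coeff (k+1) - k * q.coeff k := by
  rw [show (X - X^2) * derivative q = X * derivative q - X * (X * derivative q) by ring, coeff_sub,
    coeff_X_mul, coeff_X_mul, coeff_derivative]
  cases k with
  | zero => simp
  | succ k => rw [coeff_X_mul, coeff_derivative]; push_cast; ring

lemma TA {l : ℝ} (hl : 0 < l) (w : ℕ) :
    -C 2 * ((X - X^2) * derivative (T l (w+1))) =
      C ((w:ℝ)+2*l) * T l w - C ((w:ℝ)+1) * ((1 - C 2 * X) * T l (w+1)) := by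
  ext k
  rw [show (1 - C 2 * X) * T l (w+1) = T l (w+1) - C (2:ℝ) * (X * T l (w+1)) by ring]
  cases k with
  | zero =>
    have := R2 hl w 0
    simp [mul_coeff_zero, coeff_T]
    simp at this
    linarith
  | succ k =>
    rw [neg_mul, coeff_neg, coeff_C_mul, X1X_coeff, coeff_sub, coeff_C_mul, coeff_C_mul, coeff_sub,
      coeff_C_mul, coeff_X_mul]
    simp only [coeff_T]
    have h3 : ((k:ℝ)+1)*(l+1/2+k) ≠ 0 := by positivity
    apply mul_left_cancel₀ h3
    linear_combination (-2*((k:ℝ)+1) + (w+1)) * R3 hl w k - 2*(((k:ℝ)+1)*(l+1/2+k)) * R2 hl w k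
      - (w+2*l) * R1 hl w k

lemma TB {l : ℝ} (hl : 0 < l) (w : ℕ) :
    -C 2 * ((X - X^2) * derivative (T l w)) =
      C ((w:ℝ)+2*l) * ((1 - C 2 * X) * T l w) - C ((w:ℝ)+1) * T l (w+1) := by
  ext k
  rw [show (1 - C 2 * X) * T l w = T l w - C (2:ℝ) * (X * T l w) by ring]
  cases k with
  | zero =>
    have := R2 hl w 0
    simp [mul_coeff_zero, coeff_T]
    simp at this
    linarith
  | succ k =>
    rw [neg_mul, coeff_neg, coeff_C_mul, X1X_coeff, coeff_sub, coeff_C_mul, coeff_C_mul, coeff_sub,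
      coeff_C_mul, coeff_X_mul]
    simp only [coeff_T]
    have h3 : ((k:ℝ)+1)*(l+1/2+k) ≠ 0 := by positivity
    apply mul_left_cancel₀ h3
    linear_combination (w+1) * R3 hl w k +(-2*((k:ℝ)+1) - (w+2*l)) * R1 hl w k

lemma TD {l : ℝ} (hl : 0 < l) (w : ℕ) :
    derivative (T l (w+1)) = - C (4*l) * T (l+1) w := by
  ext k
  rw [coeff_derivative, neg_mul, coeff_neg, coeff_C_mul, coeff_T, coeff_T]
  linear_combination RD hl w k

/-- `G_w = C_w^{(n+1)/2}/(n+1)` as a polynomial. -/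
noncomputable def G (n w : ℕ) : ℝ[X] :=
  C (1/((n:ℝ)+1)) * (T (((n:ℝ)+1)/2) w).comp (C (1/2) * (1 - X))

lemma G_zero (n : ℕ) : G n 0 = C (1/((n:ℝ)+1)) := by
  simp [G, T, cf, poch]

lemma dG (n w : ℕ) : derivative (G n w) =
    C (1/((n:ℝ)+1)) * (-C (1/2) * (derivative (T (((n:ℝ)+1)/2) w)).comp (C (1/2) * (1 - X))) := by
  simp only [G, derivative_C_mul, derivative_comp]
  congr 1
  simp

lemma CC : (2 * C (1/2) : ℝ[X]) = 1 := by
  rw [← map_ofNat (C : ℝ →+* ℝ[X]) 2, ← C_mul]; simp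

lemma GA (n w : ℕ) : (1 - X^2) * derivative (G n (w+1)) =
    C ((w:ℝ)+n+1) * G n w - C ((w:ℝ)+1) * (X * G n (w+1)) := by
  have h := congrArg (fun q => q.comp (C (1/2) * (1 - X))) (TA (show 0 < ((n:ℝ)+1)/2 by positivity) w)
  simp only [mul_comp, sub_comp, neg_comp, pow_comp, X_comp, C_comp, one_comp] at h
  rw [dG, G, G]
  rw [show (w:ℝ) + 2*(((n:ℝ)+1)/2) = w+n+1 by ring, map_ofNat] at h
  have hc := CC
  generalize (derivative (T (((n:ℝ)+1)/2) (w+1))).comp (C (1/2) * (1 - X)) = D at *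
  generalize (T (((n:ℝ)+1)/2) (w+1)).comp (C (1/2) * (1 - X)) = T1 at *
  generalize (T (((n:ℝ)+1)/2) w).comp (C (1/2) * (1 - X)) = T0 at *
  generalize (C (1/2) : ℝ[X]) = c at *
  linear_combination C (1/((n:ℝ)+1)) * h - C (1/((n:ℝ)+1)) * D * c * (1-X)^2 * hc
    + C ((w:ℝ)+1) * C (1/((n:ℝ)+1)) * T1 * (1-X) * hc

lemma GB (n w : ℕ) : (1 - X^2) * derivative (G n w) =
    C ((w:ℝ)+n+1) * (X * G n w) - C ((w:ℝ)+1) * G n (w+1) := by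
  have h := congrArg (fun q => q.comp (C (1/2) * (1 - X))) (TB (show 0 < ((n:ℝ)+1)/2 by positivity) w)
  simp only [mul_comp, sub_comp, neg_comp, pow_comp, X_comp, C_comp, one_comp] at h
  rw [dG, G, G]
  rw [show (w:ℝ) + 2*(((n:ℝ)+1)/2) = w+n+1 by ring, map_ofNat] at h
  have hc := CC
  generalize (derivative (T (((n:ℝ)+1)/2) w)).comp (C (1/2) * (1 - X)) = D at *
  generalize (T (((n:ℝ)+1)/2) (w+1)).comp (C (1/2) * (1 - X)) = T1 at *
  generalize (T (((n:ℝ)+1)/2) w).comp (C (1/2) * (1 - X)) = T0 at *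
  generalize (C (1/2) : ℝ[X]) = c at *
  linear_combination C (1/((n:ℝ)+1)) * h - C (1/((n:ℝ)+1)) * D * c * (1-X)^2 * hc
    - C ((w:ℝ)+n+1) * C (1/((n:ℝ)+1)) * T0 * (1-X) * hc

lemma one_sub_ne : (1 - X^2 : ℝ[X]) ≠ 0 := by
  intro h
  have := congrArg (eval 0) h
  simp at this

lemma dG_zero (n : ℕ) : derivative (G n 0) = 0 := by rw [G_zero]; simp

/-- lowering relation for the derivatives -/
lemma GC (n w : ℕ) : derivative (G n w) = X * derivative (G n (w+1)) - C ((w:ℝ)+1) * G n (w+1) := by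
  apply mul_left_cancel₀ one_sub_ne
  linear_combination GB n w - X * GA n w

/-- three term recurrence -/
lemma G3 (n w : ℕ) : C (2*(w:ℝ)+n+3) * (X * G n (w+1)) =
    C ((w:ℝ)+2) * G n (w+2) + C ((w:ℝ)+n+1) * G n w := by
  have a := GA n w
  have b := GB n (w+1)
  rw [a] at b
  push_cast at b
  have e1 : (C (2*(w:ℝ)+n+3) : ℝ[X]) = C ((w:ℝ)+1) + C ((w:ℝ)+1+n+1) := by
    rw [← C_add]; congr 1; ring
  have e2 : (C ((w:ℝ)+2) : ℝ[X]) = C ((w:ℝ)+1+1) := by congr 1; ring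
  rw [e1, e2]
  linear_combination -b

/-- the differential equation -/
lemma GODE (n w : ℕ) : (1 - X^2) * derivative (derivative (G n w)) - C ((n:ℝ)+2) * X * derivative (G n w)
    + C ((w:ℝ)*(w+n+1)) * G n w = 0 := by
  apply mul_left_cancel₀ one_sub_ne
  have a := GA n w
  have b := GB n w
  have b' := congrArg derivative b
  simp only [derivative_mul, derivative_sub, derivative_C, derivative_one, derivative_X,
    derivative_X_pow] at b'
  simp only [map_add, map_mul, map_natCast, map_one, map_ofNat, Nat.cast_ofNat] at *
  linear_combination (1-X^2) * b' - (w+1) * a + (w+1)*X*b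

lemma geg_top (n w : ℕ) (x : ℝ) : 1 / ((n:ℝ)+1) * geg (((n:ℝ)+1)/2) (w:ℤ) x = (G n w).eval x := by
  rw [geg_eq, G, eval_mul, eval_C, eval_comp]
  congr 2
  simp; ring

lemma geg_der (n w : ℕ) (x : ℝ) : geg (((n:ℝ)+3)/2) ((w:ℤ)-1) x = (derivative (G n w)).eval x := by
  cases w with
  | zero => rw [dG_zero]; simp [geg]
  | succ w =>
    rw [show ((w+1:ℕ):ℤ)-1 = (w:ℤ) by push_cast; ring, geg_eq, dG, TD (by positivity),
      show ((n:ℝ)+1)/2+1 = (n+3)/2 by ring]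
    simp only [eval_mul, eval_neg, eval_C, eval_comp, mul_comp, neg_comp, C_comp, eval_sub, eval_one, eval_X]
    rw [show 1/2*(1-x) = (1-x)/2 by ring]
    field_simp
    ring

lemma geg_der2 (n w : ℕ) (x : ℝ) : geg (((n:ℝ)+3)/2) ((w:ℤ)-2) x =
    x * (derivative (G n w)).eval x - w * (G n w).eval x := by
  cases w with
  | zero => rw [dG_zero]; simp [geg]
  | succ w =>
    rw [show ((w+1:ℕ):ℤ)-2 = (w:ℤ)-1 by push_cast; ring, geg_der, GC]
    simp

lemma Pmat_eq (n : ℕ) (p : ℝ) (hp : 0 < p) (hpn : p < n) (w : ℕ) (x : ℝ) :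
    Pmat n p w x = !![(p * (G n w).eval x + x * (derivative (G n w)).eval x) / (p+w),
      (derivative (G n w)).eval x / (p+w);
      (derivative (G n w)).eval x / (n-p+w),
      ((n-p) * (G n w).eval x + x * (derivative (G n w)).eval x) / (n-p+w)] := by
  have h1 : p + w ≠ 0 := by positivity
  have h2 : (n:ℝ) - p + w ≠ 0 := by
    have : 0 < (n:ℝ) - p := by linarith
    positivity
  simp only [Pmat, geg_top, geg_der, geg_der2]
  ext i j
  fin_cases i <;> fin_cases j <;> simp <;> field_simp <;> ring

lemma int_w (n : ℕ) (hn : 1 ≤ n) :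
    IntervalIntegrable (fun x : ℝ => (1 - x^2) ^ ((n:ℝ)/2 - 1)) MeasureTheory.volume (-1) 1 := by
  rcases Nat.lt_or_ge n 2 with h | h
  · obtain rfl : n = 1 := by omega
    have := intervalIntegral.integrableOn_deriv_of_nonneg (a := -1) (b := 1) (g := Real.arcsin)
      (g' := fun x : ℝ => 1 / Real.sqrt (1 - x^2)) Real.continuous_arcsin.continuousOn
      (fun x hx => Real.hasDerivAt_arcsin (by linarith [hx.1]) (by linarith [hx.2]))
      (fun x _ => by positivity)
    rw [intervalIntegrable_iff_integrableOn_Ioc_of_le (by norm_num)]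
    refine this.congr_fun (fun x hx => ?_) measurableSet_Ioc
    have h0 : 0 ≤ 1 - x^2 := by nlinarith [hx.1, hx.2]
    simp only
    rw [show ((1:ℕ):ℝ)/2 - 1 = -(1/2) by norm_num, Real.rpow_neg h0, Real.sqrt_eq_rpow, one_div]
  · apply Continuous.intervalIntegrable
    have : 0 ≤ (n:ℝ)/2 - 1 := by
      have : (2:ℝ) ≤ n := by exact_mod_cast h
      linarith
    exact Continuous.rpow_const (by fun_prop) (fun x => Or.inr this)

lemma int_wf (n : ℕ) (hn : 1 ≤ n) (f : ℝ[X]) :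
    IntervalIntegrable (fun x : ℝ => (1 - x^2) ^ ((n:ℝ)/2 - 1) * f.eval x) MeasureTheory.volume (-1) 1 :=
  (int_w n hn).mul_continuousOn f.continuous.continuousOn

/-- the functional of integration against `(1-x²)^{n/2-1}` -/
noncomputable def L (n : ℕ) (hn : 1 ≤ n) : ℝ[X] →ₗ[ℝ] ℝ where
  toFun f := ∫ x in (-1:ℝ)..1, (1 - x^2) ^ ((n:ℝ)/2 - 1) * f.eval x
  map_add' f g := by
    simp only [eval_add, mul_add]
    exact intervalIntegral.integral_add (int_wf n hn f) (int_wf n hn g)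
  map_smul' c f := by
    simp only [eval_smul, smul_eq_mul, RingHom.id_apply]
    rw [← intervalIntegral.integral_const_mul]
    congr 1; ext x; ring

lemma L_apply (n : ℕ) (hn : 1 ≤ n) (f : ℝ[X]) :
    L n hn f = ∫ x in (-1:ℝ)..1, (1 - x^2) ^ ((n:ℝ)/2 - 1) * f.eval x := rfl

lemma LZ (n : ℕ) (hn : 1 ≤ n) (f : ℝ[X]) :
    L n hn ((1 - X^2) * derivative f - C (n:ℝ) * X * f) = 0 := by
  rw [L_apply]
  have hn0 : (0:ℝ) < n := by exact_mod_cast hn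
  rw [intervalIntegral.integral_eq_sub_of_hasDerivAt_of_le (by norm_num)
    (f := fun x : ℝ => (1 - x^2) ^ ((n:ℝ)/2) * f.eval x) _ _ (int_wf n hn _)]
  · have : (n:ℝ)/2 ≠ 0 := by positivity
    simp [Real.zero_rpow this]
  · apply Continuous.continuousOn
    apply Continuous.mul _ f.continuous
    exact Continuous.rpow_const (by fun_prop) (fun x => Or.inr (by positivity))
  · intro x hx
    have h0 : 0 < 1 - x^2 := by nlinarith [hx.1, hx.2]
    have h1 : HasDerivAt (fun x : ℝ => 1 - x^2) (-(2*x)) x := by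
      simpa using (hasDerivAt_pow 2 x).const_sub 1
    have h2 := (h1.rpow_const (p := (n:ℝ)/2) (Or.inl h0.ne')).mul (f.hasDerivAt x)
    refine h2.congr_deriv ?_
    have : (1 - x^2) ^ ((n:ℝ)/2) = (1 - x^2) ^ ((n:ℝ)/2 - 1) * (1 - x^2) := by
      rw [← Real.rpow_add_one h0.ne']; congr 1; ring
    rw [this]
    simp
    ring

lemma L_shift (n : ℕ) (hn : 1 ≤ n) (f : ℝ[X]) : L n hn ((1 - X^2) * f) = L (n+2) (by omega) f := by
  rw [L_apply, L_apply]
  apply intervalIntegral.integral_congr_ae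
  have : ∀ᵐ x : ℝ, x ≠ 1 := by
    simp [MeasureTheory.ae_iff]
  filter_upwards [this] with x hx1 hx
  rw [Set.uIoc_of_le (by norm_num)] at hx
  have h0 : 0 < 1 - x^2 := by
    have : x < 1 := lt_of_le_of_ne hx.2 hx1
    nlinarith [hx.1]
  rw [show ((n+2:ℕ):ℝ)/2 - 1 = (n:ℝ)/2 - 1 + 1 by push_cast; ring, Real.rpow_add_one h0.ne']
  simp
  ring

lemma L_base : ∀ n : ℕ, L (n+2) (by omega) 1 =
    Real.sqrt Real.pi * Real.Gamma ((n:ℝ)/2+1) / Real.Gamma ((n:ℝ)/2+3/2) := by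
  intro n
  induction n using Nat.twoStepInduction with
  | zero =>
    rw [L_apply]
    have : Real.Gamma (3/2) = Real.sqrt Real.pi / 2 := by
      rw [show (3/2:ℝ) = 1/2 + 1 by norm_num, Real.Gamma_add_one (by norm_num), Real.Gamma_one_half_eq]
      ring
    have h : Real.sqrt Real.pi ≠ 0 := by positivity
    simp [this]
    norm_num
    field_simp
  | one =>
    rw [L_apply]
    have : Real.Gamma (3/2) = Real.sqrt Real.pi / 2 := by
      rw [show (3/2:ℝ) = 1/2 + 1 by norm_num, Real.Gamma_add_one (by norm_num), Real.Gamma_one_half_eq]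
      ring
    have h2 : Real.Gamma 2 = 1 := Real.Gamma_two
    have h3 := integral_sqrt_one_sub_sq
    simp only [Real.sqrt_eq_rpow] at h3
    simp only [eval_one, mul_one]
    norm_num
    rw [this, h3]
    have := Real.mul_self_sqrt Real.pi_pos.le
    linear_combination -this/2
  | more n ih _ =>
    have z := LZ (n+2) (by omega) X
    have s := L_shift (n+2) (by omega) 1
    have e : (1 - X^2) * derivative X - C ((n+2:ℕ):ℝ) * X * X
      = ((n:ℝ)+3) • ((1 - X^2) * 1 : ℝ[X]) - ((n:ℝ)+2) • (1:ℝ[X]) := by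
      simp only [smul_eq_C_mul]
      simp only [derivative_X, map_add, map_natCast, map_ofNat, Nat.cast_add, Nat.cast_ofNat]
      ring
    rw [e, map_sub, map_smul, map_smul, s, ih] at z
    simp only [smul_eq_mul] at z
    have g1 : Real.Gamma (((n+2:ℕ):ℝ)/2+1) = ((n:ℝ)/2+1) * Real.Gamma ((n:ℝ)/2+1) := by
      rw [← Real.Gamma_add_one (by positivity)]; congr 1; push_cast; ring
    have g2 : Real.Gamma (((n+2:ℕ):ℝ)/2+3/2) = ((n:ℝ)/2+3/2) * Real.Gamma ((n:ℝ)/2+3/2) := by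
      rw [← Real.Gamma_add_one (by positivity)]; congr 1; push_cast; ring
    have p2 : 0 < Real.Gamma ((n:ℝ)/2+3/2) := Real.Gamma_pos_of_pos (by positivity)
    rw [g1, g2]
    have h3 : (n:ℝ)+3 ≠ 0 := by positivity
    apply mul_left_cancel₀ h3
    rw [sub_eq_zero] at z
    rw [z]
    field_simp

lemma L_C (n : ℕ) (hn : 1 ≤ n) (c : ℝ) (f : ℝ[X]) : L n hn (C c * f) = c * L n hn f := by
  rw [← smul_eq_C_mul, map_smul, smul_eq_mul]

lemma L_dd (n : ℕ) (hn : 1 ≤ n) (w v : ℕ) :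
    L n hn ((1 - X^2)^2 * (derivative (G n w) * derivative (G n v))) =
      (w:ℝ)*(w+n+1) * L n hn ((1 - X^2) * (G n w * G n v)) := by
  have z := LZ n hn ((1 - X^2) * (derivative (G n w) * G n v))
  have o := GODE n w
  rw [← L_C, ← sub_eq_zero, ← map_sub]
  rw [← z]
  congr 1
  simp only [derivative_mul, derivative_sub, derivative_one, derivative_X_pow]
  simp only [map_add, map_mul, map_natCast, map_one, map_ofNat, Nat.cast_ofNat] at *
  linear_combination -(1 - X^2) * G n v * o

lemma L_orth (n : ℕ) (hn : 1 ≤ n) (w v : ℕ) (h : w ≠ v) :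
    L n hn ((1 - X^2) * (G n w * G n v)) = 0 := by
  have a := L_dd n hn w v
  have b := L_dd n hn v w
  rw [mul_comm (G n v), mul_comm (derivative (G n v)), a] at b
  have h1 : ((w:ℝ) - v) * (w + v + n + 1) ≠ 0 := by
    apply mul_ne_zero
    · rw [sub_ne_zero]; exact_mod_cast h
    · positivity
  apply (mul_eq_zero.mp _).resolve_left h1
  linear_combination b

lemma G3z (n : ℕ) : C ((n:ℝ)+1) * (X * G n 0) = G n 1 := by
  have b := GB n 0
  rw [dG_zero] at b
  simp at b ⊢
  linear_combination -b

lemma L_rec (n : ℕ) (hn : 1 ≤ n) (w : ℕ) :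
    ((w:ℝ)+1) * (2*w+n+3) * L n hn ((1 - X^2) * (G n (w+1) * G n (w+1))) =
      (2*w+n+1) * (w+n+1) * L n hn ((1 - X^2) * (G n w * G n w)) := by
  have a : (2*(w:ℝ)+n+3) * L n hn ((1 - X^2) * (X * G n (w+1) * G n w)) =
      (w+n+1) * L n hn ((1 - X^2) * (G n w * G n w)) := by
    have o := L_orth n hn (w+2) w (by omega)
    rw [← L_C, ← L_C]
    rw [show C (2*(w:ℝ)+n+3) * ((1 - X^2) * (X * G n (w+1) * G n w)) =
      C ((w:ℝ)+2) * ((1 - X^2) * (G n (w+2) * G n w)) + C ((w:ℝ)+n+1) * ((1 - X^2) * (G n w * G n w)) by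
        linear_combination (1 - X^2) * G n w * G3 n w, map_add, L_C, o]
    simp
  have b : (2*(w:ℝ)+n+1) * L n hn ((1 - X^2) * (X * G n (w+1) * G n w)) =
      (w+1) * L n hn ((1 - X^2) * (G n (w+1) * G n (w+1))) := by
    cases w with
    | zero =>
      rw [← L_C, ← L_C]
      congr 1
      simp
      have := G3z n
      simp at this
      linear_combination (1 - X^2) * G n 1 * this
    | succ w =>
      have o := L_orth n hn w (w+2) (by omega)
      have e : C (2*((w+1:ℕ):ℝ)+n+1) * ((1 - X^2) * (X * G n (w+1+1) * G n (w+1))) =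
        C (((w+1:ℕ):ℝ)+1) * ((1 - X^2) * (G n (w+2) * G n (w+2)))
          + C ((w:ℝ)+n+1) * ((1 - X^2) * (G n w * G n (w+2))) := by
        rw [show 2*((w+1:ℕ):ℝ)+n+1 = 2*(w:ℝ)+n+3 by push_cast; ring,
          show ((w+1:ℕ):ℝ)+1 = (w:ℝ)+2 by push_cast; ring]
        linear_combination (1 - X^2) * G n (w+2) * G3 n w
      rw [← L_C, ← L_C, e, map_add, L_C _ _ ((w:ℝ)+n+1), o]
      simp
  linear_combination (2*(w:ℝ)+n+1) * a - (2*(w:ℝ)+n+3) * b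

noncomputable def den (n w : ℕ) : ℝ :=
  Real.sqrt Real.pi * 2 ^ (w / 2) * Real.Gamma ((n : ℝ) / 2 + 1 + (w / 2 : ℕ)) *
        ∏ k ∈ Finset.range ((w + 1) / 2), ((n : ℝ) + 2 * k + 1)

noncomputable def num (n w : ℕ) : ℝ :=
  (w.factorial : ℝ) * ((n : ℝ) + 1) * ((n : ℝ) + 2 * w + 1) * Real.Gamma ((n : ℝ) / 2 + 3 / 2)

lemma den_pos (n w : ℕ) : 0 < den n w := by
  have : 0 < Real.Gamma ((n : ℝ) / 2 + 1 + (w / 2 : ℕ)) := Real.Gamma_pos_of_pos (by positivity)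
  have : 0 < ∏ k ∈ Finset.range ((w + 1) / 2), ((n : ℝ) + 2 * k + 1) :=
    Finset.prod_pos (fun k _ => by positivity)
  unfold den
  positivity

lemma num_pos (n w : ℕ) : 0 < num n w := by
  have : 0 < Real.Gamma ((n : ℝ) / 2 + 3 / 2) := Real.Gamma_pos_of_pos (by positivity)
  unfold num
  positivity

lemma den_succ (n w : ℕ) : den n (w+1) = ((w:ℝ)+n+1) * den n w := by
  unfold den
  rcases Nat.even_or_odd' w with ⟨m, rfl | rfl⟩
  · rw [show (2*m+1)/2 = m by omega, show 2*m/2 = m by omega, show (2*m+1+1)/2 = m+1 by omega,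
      Finset.prod_range_succ]
    push_cast; ring
  · rw [show (2*m+1+1)/2 = m+1 by omega, show (2*m+1)/2 = m by omega,
      show (2*m+1+1+1)/2 = m+1 by omega,
      show (n:ℝ)/2+1+((m+1:ℕ):ℝ) = (n:ℝ)/2+1+m + 1 by push_cast; ring,
      Real.Gamma_add_one (by positivity)]
    push_cast; ring

lemma L_norm (n : ℕ) (hn : 1 ≤ n) (w : ℕ) :
    num n w * L n hn ((1 - X^2) * (G n w * G n w)) = den n w := by
  induction w with
  | zero =>
    have : 0 < Real.Gamma ((n : ℝ) / 2 + 3 / 2) := Real.Gamma_pos_of_pos (by positivity)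
    rw [G_zero, show (1 - X^2) * (C (1/((n:ℝ)+1)) * C (1/((n:ℝ)+1))) =
      C (1/((n:ℝ)+1) * (1/((n:ℝ)+1))) * ((1 - X^2) * 1) by rw [C_mul]; ring, L_C, L_shift, L_base]
    simp [num, den]
    field_simp
  | succ w ih =>
    have r := L_rec n hn w
    rw [den_succ, ← ih]
    have e : (n+2*(w:ℝ)+1) * num n (w+1) = (w+1) * (2*w+n+3) * num n w := by
      simp only [num, Nat.factorial_succ]; push_cast; ring
    have h : (n+2*(w:ℝ)+1) ≠ 0 := by positivity
    apply mul_left_cancel₀ h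
    linear_combination L n hn ((1 - X^2) * (G n (w+1) * G n (w+1))) * e + num n w * r

/-- rows of `P_w` up to normalisation -/
noncomputable def row (n : ℕ) (p : ℝ) (w : ℕ) : Matrix (Fin 2) (Fin 2) ℝ[X] :=
  !![C p * G n w + X * derivative (G n w), derivative (G n w);
    derivative (G n w), C (n-p) * G n w + X * derivative (G n w)]

noncomputable def WM (n : ℕ) (p : ℝ) : Matrix (Fin 2) (Fin 2) ℝ[X] :=
  !![C p * X^2 + C (n-p), -C (n:ℝ) * X; -C (n:ℝ) * X, C (n-p) * X^2 + C p]

lemma L_diag (n : ℕ) (hn : 1 ≤ n) (p : ℝ) (w v : ℕ) :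
    L n hn (C p * (C p * (C p * X^2 + C (n-p)) * (G n w * G n v)
      - C p * X * (1 - X^2) * (G n w * derivative (G n v) + derivative (G n w) * G n v)
      + (1 - X^2)^2 * (derivative (G n w) * derivative (G n v)))) =
    p * ((p + w) * (n - p + w + 1)) * L n hn ((1 - X^2) * (G n w * G n v)) := by
  have z := LZ n hn (X * (G n w * G n v))
  rw [L_C, show (C p * (C p * X^2 + C (n-p)) * (G n w * G n v)
      - C p * X * (1 - X^2) * (G n w * derivative (G n v) + derivative (G n w) * G n v)
      + (1 - X^2)^2 * (derivative (G n w) * derivative (G n v))) =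
      C (p*(n-p+1)) * ((1 - X^2) * (G n w * G n v))
      + (1 - X^2)^2 * (derivative (G n w) * derivative (G n v))
      - C p * ((1 - X^2) * derivative (X * (G n w * G n v)) - C (n:ℝ) * X * (X * (G n w * G n v))) by
      simp only [derivative_mul, derivative_X, map_add, map_mul, map_sub, map_natCast, map_one]
      ring, map_sub, map_add, L_C, L_C, L_dd, z]
  ring

lemma L_row (n : ℕ) (hn : 1 ≤ n) (p : ℝ) (w v : ℕ) (i j : Fin 2) :
    L n hn ((row n p w * WM n p * (row n p v)ᵀ) i j) =
      (!![p * ((p + w) * (n - p + w + 1)), 0; 0, (n-p) * ((n - p + w) * (p + w + 1))] : Matrix (Fin 2) (Fin 2) ℝ) i j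
        * L n hn ((1 - X^2) * (G n w * G n v)) := by
  have z := LZ n hn (G n w * G n v)
  fin_cases i <;> fin_cases j
  · have e : (row n p w * WM n p * (row n p v)ᵀ) 0 0 = C p * (C p * (C p * X^2 + C (n-p)) * (G n w * G n v)
      - C p * X * (1 - X^2) * (G n w * derivative (G n v) + derivative (G n w) * G n v)
      + (1 - X^2)^2 * (derivative (G n w) * derivative (G n v))) := by
      simp [row, WM, Matrix.mul_apply, Fin.sum_univ_two]
      ring
    change L n hn ((row n p w * WM n p * (row n p v)ᵀ) 0 0) = _
    rw [e]
    rw [L_diag]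
    simp
  · have e : (row n p w * WM n p * (row n p v)ᵀ) 0 1 = C (p*(n-p)) * ((1 - X^2) * derivative (G n w * G n v) - C (n:ℝ) * X * (G n w * G n v)) := by
      simp [row, WM, Matrix.mul_apply, Fin.sum_univ_two]
      ring
    change L n hn ((row n p w * WM n p * (row n p v)ᵀ) 0 1) = _
    rw [e]
    rw [L_C, z]
    simp
  · have e : (row n p w * WM n p * (row n p v)ᵀ) 1 0 = C (p*(n-p)) * ((1 - X^2) * derivative (G n w * G n v) - C (n:ℝ) * X * (G n w * G n v)) := by
      simp [row, WM, Matrix.mul_apply, Fin.sum_univ_two]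
      ring
    change L n hn ((row n p w * WM n p * (row n p v)ᵀ) 1 0) = _
    rw [e]
    rw [L_C, z]
    simp
  · have e : (row n p w * WM n p * (row n p v)ᵀ) 1 1 = C (n-p) * (C (n-p) * (C (n-p) * X^2 + C p) * (G n w * G n v)
      - C (n-p) * X * (1 - X^2) * (G n w * derivative (G n v) + derivative (G n w) * G n v)
      + (1 - X^2)^2 * (derivative (G n w) * derivative (G n v))) := by
      simp [row, WM, Matrix.mul_apply, Fin.sum_univ_two]
      ring
    change L n hn ((row n p w * WM n p * (row n p v)ᵀ) 1 1) = _
    rw [e]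
    have := L_diag n hn (n-p) w v
    rw [show (n:ℝ) - (n-p) = p by ring] at this
    rw [this]
    simp

lemma mat_eq (n : ℕ) (p : ℝ) (hp : 0 < p) (hpn : p < n) (w v : ℕ) (x : ℝ) (i j : Fin 2) :
    (Pmat n p w x * Wmat n p x * (Pmat n p v x)ᵀ) i j =
      (![p+w, n-p+w] i)⁻¹ * (![p+v, n-p+v] j)⁻¹ * ((1 - x^2) ^ ((n:ℝ)/2 - 1) *
        ((row n p w * WM n p * (row n p v)ᵀ) i j).eval x) := by
  rw [Pmat_eq n p hp hpn, Pmat_eq n p hp hpn]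
  fin_cases i <;> fin_cases j <;>
  · simp [row, WM, Wmat, Matrix.mul_apply, Fin.sum_univ_two]
    ring

noncomputable def sc (n : ℕ) (p : ℝ) (w : ℕ) (i : Fin 2) : ℝ :=
  Real.sqrt (num n w / den n w) * ![Real.sqrt ((p + w) / (p * ((n : ℝ) - p + w + 1))),
      Real.sqrt (((n : ℝ) - p + w) / (((n : ℝ) - p) * (p + w + 1)))] i

lemma Smat_eq (n : ℕ) (p : ℝ) (w : ℕ) : Smat n p w = Matrix.diagonal (sc n p w) := by
  rw [Smat, ← Matrix.diagonal_smul]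
  rfl

lemma Q_eq (n : ℕ) (p : ℝ) (hp : 0 < p) (hpn : p < n) (w v : ℕ) (i j : Fin 2) :
   (fun x => (Qmat n p w x * Wmat n p x * (Qmat n p v x)ᵀ) i j) = fun x => 
     (sc n p w i * sc n p v j * ((![p+w, n-p+w] i)⁻¹ * (![p+v, n-p+v] j)⁻¹)) *
      ((1 - x^2) ^ ((n:ℝ)/2 - 1) * ((row n p w * WM n p * (row n p v)ᵀ) i j).eval x) := by
  ext x
  rw [mul_assoc (sc n p w i * sc n p v j), ← mat_eq n p hp hpn]
  simp only [Qmat, Smat_eq]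
  rw [Matrix.transpose_mul, Matrix.diagonal_transpose, ← Matrix.mul_assoc, Matrix.mul_diagonal,
    Matrix.mul_assoc (Matrix.diagonal _), Matrix.mul_assoc (Matrix.diagonal _), Matrix.diagonal_mul]
  ring

lemma Q_int (n : ℕ) (hn : 1 ≤ n) (p : ℝ) (hp : 0 < p) (hpn : p < n) (w v : ℕ) (i j : Fin 2) :
   IntervalIntegrable (fun x => (Qmat n p w x * Wmat n p x * (Qmat n p v x)ᵀ) i j)
    MeasureTheory.volume (-1) 1 := by
  rw [Q_eq n p hp hpn]
  exact (int_wf n hn _).const_mul _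

lemma Q_orth (n : ℕ) (hn : 1 ≤ n) (p : ℝ) (hp : 0 < p) (hpn : p < n) (w v : ℕ) (i j : Fin 2) :
   ∫ x in (-1:ℝ)..1, (Qmat n p w x * Wmat n p x * (Qmat n p v x)ᵀ) i j =
    if w = v then (if i = j then 1 else 0) else 0 := by
  rw [Q_eq n p hp hpn, intervalIntegral.integral_const_mul, ← L_apply n hn, L_row]
  split_ifs with h1 h2
  · subst h1; subst h2
    have N := L_norm n hn w
    have hnum := num_pos n w
    have hden := den_pos n w
    have hq : 0 < (n:ℝ) - p := by linarith
    have hL : L n hn ((1 - X^2) * (G n w * G n w)) = den n w / num n w := by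
      field_simp; linarith
    rw [hL]
    have s1 : Real.sqrt (num n w / den n w) * Real.sqrt (num n w / den n w) = num n w / den n w :=
      Real.mul_self_sqrt (by positivity)
    fin_cases i
    · have s2 := Real.mul_self_sqrt (show 0 ≤ (p + w) / (p * ((n : ℝ) - p + w + 1)) by positivity)
      simp [sc]
      rw [mul_mul_mul_comm (Real.sqrt _), s1, s2]
      field_simp
    · have s2 := Real.mul_self_sqrt (show 0 ≤ ((n:ℝ) - p + w) / (((n : ℝ) - p) * (p + w + 1)) by positivity)
      simp [sc]
      rw [mul_mul_mul_comm (Real.sqrt _), s1, s2]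
      field_simp
  · fin_cases i <;> fin_cases j <;> simp at h2 ⊢
  · rw [L_orth n hn w v h1]; simp

lemma tr_eq (N : ℕ) (A Q : ℕ → Matrix (Fin 2) (Fin 2) ℝ) (W : Matrix (Fin 2) (Fin 2) ℝ) :
    Matrix.trace ((∑ w ∈ Finset.range (N + 1), A w * Q w) * W *
          (∑ w ∈ Finset.range (N + 1), A w * Q w)ᵀ) =
    ∑ w ∈ Finset.range (N + 1), ∑ v ∈ Finset.range (N + 1), ∑ i : Fin 2, ∑ j : Fin 2,
      ((A v)ᵀ * A w) j i * (Q w * W * (Q v)ᵀ) i j := by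
  rw [Matrix.transpose_sum, Finset.sum_mul, Finset.sum_mul, Matrix.trace_sum]
  refine Finset.sum_congr rfl (fun w _ => ?_)
  rw [Finset.mul_sum, Matrix.trace_sum]
  refine Finset.sum_congr rfl (fun v _ => ?_)
  rw [Matrix.transpose_mul, show A w * Q w * W * ((Q v)ᵀ * (A v)ᵀ) = (A w * (Q w * W * (Q v)ᵀ)) * (A v)ᵀ by
    simp only [Matrix.mul_assoc], Matrix.trace_mul_comm, ← Matrix.mul_assoc]
  simp only [Matrix.trace, Matrix.diag_apply, Matrix.mul_apply (M := (A v)ᵀ * A w)]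
  exact Finset.sum_comm

lemma ii_sum {ι : Type*} (s : Finset ι) {f : ι → ℝ → ℝ}
    (h : ∀ i ∈ s, IntervalIntegrable (f i) MeasureTheory.volume (-1) 1) :
    IntervalIntegrable (fun x => ∑ i ∈ s, f i x) MeasureTheory.volume (-1) 1 := by
  have := IntervalIntegrable.sum s h
  rwa [show (∑ i ∈ s, f i) = fun x => ∑ i ∈ s, f i x from by ext x; simp] at this

end GegAux

/-- Finite Parseval identity for the expansion in the orthonormal polynomials `Q_w`. -/
theorem stmt_6 (n : ℕ) (hn : 1 ≤ n) (p : ℝ) (hp : 0 < p) (hpn : p < n)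
    (N : ℕ) (A : ℕ → Matrix (Fin 2) (Fin 2) ℝ) :
    ∫ x in (-1 : ℝ)..1,
        Matrix.trace ((∑ w ∈ Finset.range (N + 1), A w * Qmat n p w x) * Wmat n p x *
          (∑ w ∈ Finset.range (N + 1), A w * Qmat n p w x)ᵀ) =
      ∑ w ∈ Finset.range (N + 1), Matrix.trace (A w * (A w)ᵀ) := by
  have e : ∀ x : ℝ, Matrix.trace ((∑ w ∈ Finset.range (N + 1), A w * Qmat n p w x) * Wmat n p x *
          (∑ w ∈ Finset.range (N + 1), A w * Qmat n p w x)ᵀ) = _ :=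
    fun x => GegAux.tr_eq N A (fun w => Qmat n p w x) (Wmat n p x)
  simp only [e]
  have I := fun w v i j => (GegAux.Q_int n hn p hp hpn w v i j).const_mul (((A v)ᵀ * A w) j i)
  rw [intervalIntegral.integral_finsetSum (fun w _ => by
    refine GegAux.ii_sum _ (fun v _ => GegAux.ii_sum _ (fun i _ =>
      GegAux.ii_sum _ (fun j _ => I w v i j))))]
  refine Finset.sum_congr rfl (fun w hw => ?_)
  rw [intervalIntegral.integral_finsetSum (fun v _ => by
    refine GegAux.ii_sum _ (fun i _ =>
      GegAux.ii_sum _ (fun j _ => I w v i j)))]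
  have key : ∀ v, ∫ x in (-1:ℝ)..1, ∑ i : Fin 2, ∑ j : Fin 2,
      ((A v)ᵀ * A w) j i * (Qmat n p w x * Wmat n p x * (Qmat n p v x)ᵀ) i j =
      if w = v then Matrix.trace (A w * (A w)ᵀ) else 0 := by
    intro v
    rw [intervalIntegral.integral_finsetSum (fun i _ => 
      GegAux.ii_sum _ (fun j _ => I w v i j))]
    have : ∀ i : Fin 2, ∫ x in (-1:ℝ)..1, ∑ j : Fin 2,
      ((A v)ᵀ * A w) j i * (Qmat n p w x * Wmat n p x * (Qmat n p v x)ᵀ) i j =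
       ∑ j : Fin 2, ((A v)ᵀ * A w) j i * (if w = v then (if i = j then 1 else 0) else 0) := by
      intro i
      rw [intervalIntegral.integral_finsetSum (fun j _ => I w v i j)]
      refine Finset.sum_congr rfl (fun j _ => ?_)
      rw [intervalIntegral.integral_const_mul, GegAux.Q_orth n hn p hp hpn]
    simp only [this]
    split_ifs with h
    · subst h
      rw [Matrix.trace_mul_comm]
      simp [Matrix.trace]
    · simp
  rw [Finset.sum_congr rfl (fun v _ => key v), Finset.sum_ite_eq, if_pos hw]
end

section
/- Write M^{i,j}(p) for the blocks of M regarded as functions of the parameter p (with n, N, α fixed). Then for all 0 ≤ i, j ≤ N: M^{i,j}_{12}(p) = M^{i,j}_{21}(n-p) and M^{i,j}_{22}(p) = M^{i,j}_{11}(n-p). -/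
open Matrix

/-- The `2 × 2` block `M^{i,j} = ∫_{-1}^α Q_i(x) W_{p,n}(x) Q_j(x)^T dx`. -/
noncomputable def Mblk (n : ℕ) (p α : ℝ) (i j : ℕ) : Matrix (Fin 2) (Fin 2) ℝ :=
  Matrix.of fun a b : Fin 2 =>
    ∫ x in (-1 : ℝ)..α, (Qmat n p i x * Wmat n p x * (Qmat n p j x)ᵀ) a b

/-- The full `2(N+1) × 2(N+1)` matrix `M`, with (1-based) entries
`M_{2i+1,2j+1} = M^{i,j}_{11}`, `M_{2i+1,2j+2} = M^{i,j}_{12}`,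
`M_{2i+2,2j+1} = M^{i,j}_{21}`, `M_{2i+2,2j+2} = M^{i,j}_{22}`. -/
noncomputable def Mfull (n : ℕ) (p α : ℝ) (N : ℕ) :
    Matrix (Fin (2 * (N + 1))) (Fin (2 * (N + 1))) ℝ :=
  Matrix.of fun r c =>
    Mblk n p α (r.val / 2) (c.val / 2) ⟨r.val % 2, by omega⟩ ⟨c.val % 2, by omega⟩

/-- Blocks of `M` for parameters `p` and `n - p`: `M^{i,j}_{12}(p) = M^{i,j}_{21}(n-p)`
and `M^{i,j}_{22}(p) = M^{i,j}_{11}(n-p)`. -/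
theorem stmt_8 (n : ℕ) (hn : 1 ≤ n) (p : ℝ) (hp : 0 < p) (hpn : p < n)
    (N : ℕ) (α : ℝ) (hα : α ∈ Set.Ioo (-1 : ℝ) 1) :
    ∀ i j : ℕ, i ≤ N → j ≤ N →
      Mblk n p α i j 0 1 = Mblk n ((n : ℝ) - p) α i j 1 0 ∧
      Mblk n p α i j 1 1 = Mblk n ((n : ℝ) - p) α i j 0 0 := by
  intro i j _ _
  have h : (n : ℝ) - ((n : ℝ) - p) = p := by ring
  constructor
  all_goals
    simp only [Mblk, Matrix.of_apply]
    congr 1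
    funext x
    simp only [Qmat, Smat, Pmat, Wmat, h, Matrix.mul_apply, Fin.sum_univ_two, Matrix.transpose_apply,
      Matrix.smul_apply, Matrix.diagonal_apply, Matrix.of_apply, Matrix.cons_val', Matrix.cons_val_zero,
      Matrix.cons_val_one, Matrix.cons_val_fin_one, smul_eq_mul, if_true, Fin.isValue,
      zero_ne_one, one_ne_zero, if_false, mul_zero, zero_mul, add_zero, zero_add]
    ring
end
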